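/- Let G be a finite cyclic group of order r with generator τ, and let I := Ψ_r(τ)·Z[G] be the ideal of Z[G] generated by Ψ_r(τ). For a permutation σ of the set G, let σ̂ denote the Z-linear automorphism of Z[G] determined by σ̂(g) = σ(g) for all g ∈ G. Then σ̂(I) ⊆ I if and only if for every g ∈ G and every subgroup H ⊆ G of prime order, σ(gH) = σ(g)H as subsets of G. -/

import Mathlib

open Polynomial Pointwise

noncomputable section

/-- `Ψ_r(X) := (X^r − 1)/Φ_r(X) ∈ ℤ[X]`. -/
def PsiPoly (r : ℕ) : ℤ[X] := (X ^ r - 1) /ₘ cyclotomic r ℤ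

section Combinatorics

variable {G : Type*} [CommGroup G]

theorem eq_and_eq_of_mul_eq_mul_of_coprime {m n : ℕ} (hmn : m.Coprime n) {h h' a a' : G}
    (hh : h ^ m = 1) (hh' : h' ^ m = 1) (ha : a ^ n = 1) (ha' : a' ^ n = 1)
    (e : h * a = h' * a') : h = h' ∧ a = a' := by
  have e' : h * h'⁻¹ = a' * a⁻¹ := by
    rw [mul_inv_eq_iff_eq_mul, mul_right_comm, eq_mul_inv_iff_mul_eq, e, mul_comm]
  have h1 : (h * h'⁻¹) ^ m = 1 := by rw [mul_pow, inv_pow, hh, hh']; simp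
  have h2 : (h * h'⁻¹) ^ n = 1 := by rw [e', mul_pow, inv_pow, ha, ha']; simp
  have h3 : h * h'⁻¹ = 1 := by
    rw [← orderOf_eq_one_iff]
    exact Nat.eq_one_of_dvd_coprimes hmn (orderOf_dvd_of_pow_eq_one h1)
      (orderOf_dvd_of_pow_eq_one h2)
  have h4 : h = h' := mul_inv_eq_one.mp h3
  exact ⟨h4, by simpa [h4] using e⟩

theorem exists_mul_eq_of_pow_mul_eq_one {m n : ℕ} (hmn : m.Coprime n) {b : G}
    (hb : b ^ (m * n) = 1) : ∃ h a : G, h ^ m = 1 ∧ a ^ n = 1 ∧ b = h * a := by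
  have hbz : b ^ ((m : ℤ) * n) = 1 := by exact_mod_cast hb
  refine ⟨b ^ ((n : ℤ) * m.gcdB n), b ^ ((m : ℤ) * m.gcdA n), ?_, ?_, ?_⟩
  · rw [← zpow_natCast, ← zpow_mul, show (n : ℤ) * m.gcdB n * m = (m * n) * m.gcdB n by ring,
      zpow_mul, hbz, one_zpow]
  · rw [← zpow_natCast, ← zpow_mul, show (m : ℤ) * m.gcdA n * n = (m * n) * m.gcdA n by ring,
      zpow_mul, hbz, one_zpow]
  · rw [← zpow_add, add_comm, ← Nat.gcd_eq_gcd_ab, hmn.gcd_eq_one]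
    simp

theorem exists_ne_one_pow_eq_one [Finite G] {q : ℕ} (hq : q.Prime) (hd : q ∣ Nat.card G) :
    ∃ h : G, h ^ q = 1 ∧ h ≠ 1 := by
  have := Fact.mk hq
  obtain ⟨h, hh⟩ := exists_prime_orderOf_dvd_card' q hd
  refine ⟨h, hh ▸ pow_orderOf_eq_one h, fun h1 => ?_⟩
  rw [h1, orderOf_one] at hh
  exact hq.one_lt.ne hh

theorem coprime_prod_of_pairwise_gt {q : ℕ} {N : List ℕ} (hs : (q :: N).Pairwise (· > ·))
    (hp : ∀ n ∈ q :: N, n.Prime) : q.Coprime N.prod := by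
  rw [Nat.coprime_list_prod_right_iff]
  intro n hn
  exact (Nat.coprime_primes (hp q (by simp)) (hp n (by simp [hn]))).mpr
    (List.rel_of_pairwise_cons hs hn).ne'

/-- All iterated differences of `f` at `s`, one along some `q`-torsion element for each `q` in the
list, vanish. -/
def DifferencesVanish : List ℕ → (G → ℤ) → G → Prop
  | [], f, s => f s = 0
  | q :: N, f, s => ∀ h : G, h ^ q = 1 → DifferencesVanish N (fun x => f x - f (x * h)) s

theorem DifferencesVanish.congr {N : List ℕ} {f g : G → ℤ} {s : G}
    (hf : DifferencesVanish N f s) (hfg : ∀ a : G, a ^ N.prod = 1 → f (s * a) = g (s * a)) :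
    DifferencesVanish N g s := by
  induction N generalizing f g with
  | nil =>
    have h1 := hfg 1 (one_pow _)
    rw [mul_one] at h1
    exact h1.symm.trans hf
  | cons q N ih =>
    intro h hh
    refine ih (hf h hh) fun a ha => ?_
    have h1 := hfg a (by rw [List.prod_cons, mul_comm, pow_mul, ha, one_pow])
    have h2 := hfg (a * h) (by
      rw [List.prod_cons, mul_pow, mul_comm q, pow_mul, ha, mul_comm N.prod, pow_mul, hh]; simp)
    simp only [mul_assoc, h1, h2]

theorem DifferencesVanish.eq_zero_of_isolated [Finite G] {N : List ℕ} {f : G → ℤ} {s : G}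
    (hf : DifferencesVanish N f s) (hs : N.Pairwise (· > ·)) (hp : ∀ n ∈ N, n.Prime)
    (hd : ∀ n ∈ N, n ∣ Nat.card G) (h0 : ∀ a : G, a ^ N.prod = 1 → a ≠ 1 → f (s * a) = 0) :
    f s = 0 := by
  induction N generalizing f with
  | nil => exact hf
  | cons q N ih =>
    have hc := coprime_prod_of_pairwise_gt hs hp
    obtain ⟨h, hh, h1⟩ := exists_ne_one_pow_eq_one (hp q (by simp)) (hd q (by simp))
    have key : ∀ a : G, a ^ N.prod = 1 → f (s * a * h) = 0 := fun a ha => by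
      rw [mul_assoc]
      refine h0 _ (by
        rw [List.prod_cons, mul_pow, mul_comm q, pow_mul, ha, mul_comm N.prod, pow_mul, hh]
        simp) fun e => h1 ?_
      exact (eq_and_eq_of_mul_eq_mul_of_coprime hc hh (one_pow _) ha (one_pow _)
        (by rw [mul_comm, e, mul_one])).1
    have := ih (hf h hh) hs.of_cons (fun n hn => hp n (by simp [hn]))
      (fun n hn => hd n (by simp [hn])) fun a ha ha1 => by
        rw [key a ha, h0 a (by rw [List.prod_cons, mul_comm, pow_mul, ha, one_pow]) ha1, sub_zero]
    have k1 := key 1 (one_pow _)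
    rw [mul_one] at k1
    rwa [k1, sub_zero] at this

theorem DifferencesVanish.not_two_points [Finite G] {N : List ℕ} {f : G → ℤ} {s b : G}
    (hf : DifferencesVanish N f s) (hs : N.Pairwise (· > ·)) (hp : ∀ n ∈ N, n.Prime)
    (hd : ∀ n ∈ N, n ∣ Nat.card G) (hb : b ^ N.prod = 1) (hpos : 0 < f s) (hneg : f (s * b) < 0)
    (h0 : ∀ a : G, a ^ N.prod = 1 → a ≠ 1 → a ≠ b → f (s * a) = 0) : False := by
  induction N generalizing f b with
  | nil => exact hpos.ne' hf
  | cons q N ih =>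
    have hc := coprime_prod_of_pairwise_gt hs hp
    have hpow : ∀ a h : G, a ^ N.prod = 1 → h ^ q = 1 → (a * h) ^ (q :: N).prod = 1 :=
      fun a h ha hh => by
        rw [List.prod_cons, mul_pow, mul_comm q, pow_mul, ha, mul_comm N.prod, pow_mul, hh]
        simp
    have hp' : ∀ n ∈ N, n.Prime := fun n hn => hp n (by simp [hn])
    have hd' : ∀ n ∈ N, n ∣ Nat.card G := fun n hn => hd n (by simp [hn])
    obtain ⟨k, c, hk, hcN, rfl⟩ := exists_mul_eq_of_pow_mul_eq_one hc hb
    by_cases hk1 : k = 1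
    · subst hk1
      rw [one_mul] at hneg h0
      obtain ⟨h, hh, h1⟩ := exists_ne_one_pow_eq_one (hp q (by simp)) (hd q (by simp))
      have key : ∀ a : G, a ^ N.prod = 1 → f (s * a * h) = 0 := fun a ha => by
        rw [mul_assoc]
        refine h0 _ (hpow a h ha hh) (fun e => h1 ?_) fun e => h1 ?_
        · exact (eq_and_eq_of_mul_eq_mul_of_coprime hc hh (one_pow _) ha (one_pow _)
            (by rw [mul_comm, e, mul_one])).1
        · exact (eq_and_eq_of_mul_eq_mul_of_coprime hc hh (one_pow _) ha hcN
            (by rw [mul_comm, e, one_mul])).1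
      have k1 := key 1 (one_pow _)
      rw [mul_one] at k1
      refine ih (hf h hh) hs.of_cons hp' hd' hcN (by rwa [k1, sub_zero])
        (by rwa [key c hcN, sub_zero]) fun a ha ha1 hac => ?_
      rw [key a ha, h0 a (by simpa using hpow a 1 ha (one_pow _)) ha1 hac, sub_zero]
    · by_cases hq2 : q = 2
      · have hN : N = [] := by
          rw [List.eq_nil_iff_forall_not_mem]
          intro n hn
          have := List.rel_of_pairwise_cons hs hn
          have := (hp' n hn).two_le
          omega
        subst hN
        have hc1 : c = 1 := by simpa using hcN
        subst hc1
        rw [mul_one] at hneg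
        have := hf k hk
        simp only [DifferencesVanish] at this
        omega
      · have hk2 : k ^ 2 ≠ 1 := fun e => hk1 <| by
          rw [← orderOf_eq_one_iff]
          exact Nat.eq_one_of_dvd_coprimes
            ((Nat.coprime_primes (hp q (by simp)) Nat.prime_two).mpr hq2)
            (orderOf_dvd_of_pow_eq_one hk) (orderOf_dvd_of_pow_eq_one e)
        have hkk : k ^ 2 ≠ k := fun e => hk1 (by simpa [pow_two] using e)
        have hh : (k ^ 2) ^ q = 1 := by rw [← pow_mul, mul_comm, pow_mul, hk, one_pow]
        have key : ∀ a : G, a ^ N.prod = 1 → f (s * a * k ^ 2) = 0 := fun a ha => by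
          rw [mul_assoc]
          refine h0 _ (hpow a _ ha hh) (fun e => hk2 ?_) fun e => hkk ?_
          · exact (eq_and_eq_of_mul_eq_mul_of_coprime hc hh (one_pow _) ha (one_pow _)
              (by rw [mul_comm, e, mul_one])).1
          · exact (eq_and_eq_of_mul_eq_mul_of_coprime hc hh hk ha hcN (by rw [mul_comm, e])).1
        have := (hf _ hh).eq_zero_of_isolated hs.of_cons hp' hd' fun a ha ha1 => by
          rw [key a ha, h0 a (by simpa using hpow a 1 ha (one_pow _)) ha1, sub_zero]
          intro e
          exact hk1 (eq_and_eq_of_mul_eq_mul_of_coprime hc (one_pow _) hk ha hcN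
            (by rw [one_mul, e])).1.symm
        have k1 := key 1 (one_pow _)
        rw [mul_one] at k1
        rw [k1, sub_zero] at this
        exact hpos.ne' this

theorem eq_one_mul_of_differencesVanish [Fintype G] {L M : List ℕ} {p : ℕ} {f : G → ℤ} {s : G}
    (hs : (L ++ p :: M).Pairwise (· > ·)) (hp : ∀ n ∈ L ++ p :: M, n.Prime)
    (hd : ∀ n ∈ L ++ p :: M, n ∣ Nat.card G)
    (hv : ∀ a : G, a ^ (L ++ p :: M).prod = 1 → DifferencesVanish (L ++ p :: M) f (s * a))
    (h01 : ∀ x, f x = 0 ∨ f x = 1) (hfs : f s = 1)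
    (hsparse : ∀ x a : G, f x = 1 → f (x * a) = 1 → a ^ M.prod = 1 → a = 1)
    (hcard : (Finset.univ.filter fun x => f x = 1).card ≤ p) {h : G} (hh : h ^ p = 1) :
    f (s * h) = 1 := by
  induction L with
  | nil =>
    rw [List.nil_append] at hs hp hd hv
    have hp' : ∀ n ∈ M, n.Prime := fun n hn => hp n (by simp [hn])
    have hd' : ∀ n ∈ M, n ∣ Nat.card G := fun n hn => hd n (by simp [hn])
    have hv1 := hv 1 (one_pow _) h hh
    rw [mul_one] at hv1
    have hiso : ∀ a : G, a ^ M.prod = 1 → a ≠ 1 → f (s * a) = 0 := fun a ha ha1 =>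
      (h01 _).resolve_right fun e => ha1 (hsparse s a hfs e ha)
    by_cases hex : ∃ a : G, a ^ M.prod = 1 ∧ f (s * a * h) = 1
    · obtain ⟨b, hb, hfb⟩ := hex
      by_cases hb1 : b = 1
      · rwa [hb1, mul_one] at hfb
      exfalso
      have huniq : ∀ a : G, a ^ M.prod = 1 → a ≠ b → f (s * a * h) = 0 := fun a ha hab =>
        (h01 _).resolve_right fun e => hab <| by
          refine mul_inv_eq_one.mp
            (hsparse (s * b * h) (a * b⁻¹) hfb ?_ (by rw [mul_pow, inv_pow, ha, hb]; simp))
          convert e using 2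
          rw [mul_right_comm, ← mul_assoc, mul_right_comm s b a, mul_inv_cancel_right]
      have h1 := huniq 1 (one_pow _) (Ne.symm hb1)
      rw [mul_one] at h1
      exact hv1.not_two_points hs.of_cons hp' hd' hb (by rw [h1, hfs]; norm_num)
        (by rw [hfb, hiso b hb hb1]; norm_num)
        fun a ha ha1 hab => by rw [hiso a ha ha1, huniq a ha hab, sub_zero]
    · have hz : ∀ a : G, a ^ M.prod = 1 → f (s * a * h) = 0 := fun a ha =>
        (h01 _).resolve_right fun e => hex ⟨a, ha, e⟩
      have h1 := hz 1 (one_pow _)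
      rw [mul_one] at h1
      have := hv1.eq_zero_of_isolated hs.of_cons hp' hd' fun a ha ha1 => by
        rw [hiso a ha ha1, hz a ha, sub_zero]
      rw [h1, hfs] at this
      norm_num at this
  | cons q L ih =>
    rw [List.cons_append] at hs hp hd hv
    have hc := coprime_prod_of_pairwise_gt hs hp
    set R := L ++ p :: M with hR
    have hp' : ∀ n ∈ R, n.Prime := fun n hn => hp n (by simp [hn])
    have hd' : ∀ n ∈ R, n ∣ Nat.card G := fun n hn => hd n (by simp [hn])
    by_cases hex : ∃ k : G, k ^ q = 1 ∧ ∀ a : G, a ^ R.prod = 1 → f (s * a * k) = 0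
    · obtain ⟨k, hk, hk0⟩ := hex
      refine ih hs.of_cons hp' hd' fun a ha => ?_
      refine (hv a (by rw [List.prod_cons, mul_comm, pow_mul, ha, one_pow]) k hk).congr
        fun a' ha' => ?_
      rw [mul_assoc s a a', hk0 (a * a') (by rw [mul_pow, ha, ha', one_mul]), sub_zero]
    · exfalso
      push Not at hex
      choose! c hc1 hc2 using hex
      have hqp : p < q := List.rel_of_pairwise_cons hs (by simp [hR])
      have := Fact.mk (hp q (by simp))
      obtain ⟨g, hg⟩ := exists_prime_orderOf_dvd_card' q (hd q (by simp))
      have hgq : ∀ i : ℕ, (g ^ i) ^ q = 1 := fun i => by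
        rw [← pow_mul, mul_comm, pow_mul, ← hg, pow_orderOf_eq_one, one_pow]
      have hle : (Finset.range q).card ≤ (Finset.univ.filter fun x => f x = 1).card := by
        refine Finset.card_le_card_of_injOn (fun i => s * c (g ^ i) * g ^ i) ?_ ?_
        · intro i _
          simpa using (h01 _).resolve_left (hc2 _ (hgq i))
        · intro i hi j hj e
          have e' : g ^ i * c (g ^ i) = g ^ j * c (g ^ j) := by
            have e'' : s * c (g ^ i) * g ^ i = s * c (g ^ j) * g ^ j := e
            rw [mul_assoc, mul_assoc] at e''
            rw [mul_comm, mul_left_cancel e'', mul_comm]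
          have := (eq_and_eq_of_mul_eq_mul_of_coprime hc (hgq i) (hgq j) (hc1 _ (hgq i))
            (hc1 _ (hgq j)) e').1
          exact pow_injOn_Iio_orderOf (by simpa [hg] using hi) (by simpa [hg] using hj) this
      rw [Finset.card_range] at hle
      omega

theorem pow_prod_eq_one_of_forall_pow_eq_one {σ : G → G} {M : List ℕ}
    (hs : M.Pairwise (· > ·)) (hp : ∀ n ∈ M, n.Prime)
    (hσ : ∀ q ∈ M, ∀ x h : G, h ^ q = 1 → ((σ x)⁻¹ * σ (x * h)) ^ q = 1)
    (x : G) {a : G} (ha : a ^ M.prod = 1) : ((σ x)⁻¹ * σ (x * a)) ^ M.prod = 1 := by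
  induction M generalizing x a with
  | nil => simp_all
  | cons q M ih =>
    obtain ⟨h, b, hh, hb, rfl⟩ :=
      exists_mul_eq_of_pow_mul_eq_one (coprime_prod_of_pairwise_gt hs hp) ha
    have h1 := hσ q (by simp) x h hh
    have h2 := ih hs.of_cons (fun n hn => hp n (by simp [hn]))
      (fun n hn => hσ n (by simp [hn])) (x * h) hb
    have e : (σ x)⁻¹ * σ (x * (h * b)) = (σ x)⁻¹ * σ (x * h) * ((σ (x * h))⁻¹ * σ (x * h * b)) := by
      rw [mul_assoc, mul_inv_cancel_left, mul_assoc]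
    rw [e, List.prod_cons, mul_pow, pow_mul, h1, mul_comm q, pow_mul, h2]
    simp

end Combinatorics

section GroupRing

variable {G : Type*} [CommGroup G] [Fintype G]

open Classical in
/-- The sum in `ℤ[G]` of all elements of `G` killed by `n`. -/
def torsionSum (G : Type*) [CommGroup G] [Fintype G] (n : ℕ) : MonoidAlgebra ℤ G :=
  ∑ h : G with h ^ n = 1, MonoidAlgebra.of ℤ G h

theorem torsionSum_mul_of {n : ℕ} {k : G} (hk : k ^ n = 1) :
    torsionSum G n * MonoidAlgebra.of ℤ G k = torsionSum G n := by
  classical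
  simp only [torsionSum, Finset.sum_mul, ← map_mul]
  refine Finset.sum_bij' (fun h _ => h * k) (fun h _ => h * k⁻¹) ?_ ?_ ?_ ?_ ?_ <;>
    simp +contextual [mul_pow, hk]

open Classical in
theorem coeff_torsionSum_mul_of (n : ℕ) (z g : G) :
    (torsionSum G n * MonoidAlgebra.of ℤ G z).coeff g = if (g * z⁻¹) ^ n = 1 then 1 else 0 := by
  simp only [torsionSum, Finset.sum_mul, ← map_mul]
  rw [MonoidAlgebra.coeff_sum, Finsupp.finsetSum_apply]
  simp only [MonoidAlgebra.of_apply, MonoidAlgebra.coeff_single, Finsupp.single_apply,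
    ← eq_mul_inv_iff_mul_eq]
  rw [Finset.sum_ite_eq']
  simp

theorem X_pow_card_sub_one_dvd_of_aeval_eq_zero {τ : G} (hτ : ∀ g : G, g ∈ Subgroup.zpowers τ)
    {f : ℤ[X]} (hf : aeval (MonoidAlgebra.of ℤ G τ) f = 0) :
    X ^ Fintype.card G - 1 ∣ f := by
  have hr : Fintype.card G ≠ 0 := Fintype.card_ne_zero
  have hm : (X ^ Fintype.card G - 1 : ℤ[X]).Monic := monic_X_pow_sub_C 1 hr
  rw [← modByMonic_eq_zero_iff_dvd hm]
  set g := f %ₘ (X ^ Fintype.card G - 1) with hg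
  have hg0 : aeval (MonoidAlgebra.of ℤ G τ) g = 0 := by
    rw [hg, modByMonic_eq_sub_mul_div, map_sub, map_mul, hf, map_sub, map_pow, aeval_X, ← map_pow,
      pow_card_eq_one, map_one, map_one, sub_self, zero_mul, sub_zero]
  have hdeg : g.natDegree < Fintype.card G := by
    have := natDegree_modByMonic_lt f hm fun h => hr <| by
      rw [← natDegree_X_pow_sub_C (n := Fintype.card G) (r := (1 : ℤ)), C_1, h, natDegree_one]
    rwa [← C_1, natDegree_X_pow_sub_C] at this
  have hord : orderOf τ = Fintype.card G := by
    rw [← Nat.card_eq_fintype_card]; exact orderOf_eq_card_of_forall_mem_zpowers hτ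
  ext i
  by_cases hi : i < Fintype.card G
  · rw [aeval_eq_sum_range' hdeg] at hg0
    have := congrArg (fun x => MonoidAlgebra.coeff x (τ ^ i)) hg0
    simp only [MonoidAlgebra.coeff_sum, Finsupp.finsetSum_apply,
      MonoidAlgebra.of_apply, MonoidAlgebra.single_pow, one_pow, MonoidAlgebra.smul_single,
      MonoidAlgebra.coeff_single,
      MonoidAlgebra.coeff_zero, Finsupp.coe_zero, Pi.zero_apply] at this
    rw [Finset.sum_eq_single i] at this
    · simpa using this
    · intro j hj hji
      exact Finsupp.single_eq_of_ne fun e =>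
        hji (pow_injOn_Iio_orderOf (by simpa [hord] using hj) (by simpa [hord] using hi) e.symm)
    · simp [hi]
  · rw [coeff_zero]
    exact coeff_eq_zero_of_natDegree_lt (by omega)

theorem exists_aeval_eq {τ : G} (hτ : ∀ g : G, g ∈ Subgroup.zpowers τ) (x : MonoidAlgebra ℤ G) :
    ∃ f : ℤ[X], aeval (MonoidAlgebra.of ℤ G τ) f = x := by
  induction x using MonoidAlgebra.induction_on with
  | of g =>
    obtain ⟨n, rfl⟩ := mem_powers_iff_mem_zpowers.mpr (hτ g)
    exact ⟨X ^ n, by simp⟩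
  | add x y hx hy =>
    obtain ⟨f, rfl⟩ := hx
    obtain ⟨g, rfl⟩ := hy
    exact ⟨f + g, map_add _ _ _⟩
  | smul c x hx =>
    obtain ⟨f, rfl⟩ := hx
    exact ⟨c • f, map_smul _ _ _⟩

theorem card_filter_pow_eq_one_le [DecidableEq G] {τ : G} (hτ : ∀ g : G, g ∈ Subgroup.zpowers τ)
    {n : ℕ} (hn : 0 < n) : (Finset.univ.filter fun g : G => g ^ n = 1).card ≤ n :=
  have : IsCyclic G := ⟨τ, hτ⟩
  IsCyclic.card_pow_eq_one_le hn

theorem torsionSum_eq_aeval {τ : G} (hτ : ∀ g : G, g ∈ Subgroup.zpowers τ) {p m : ℕ}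
    (hpm : Fintype.card G = m * p) :
    torsionSum G p =
      aeval (MonoidAlgebra.of ℤ G τ) (∑ i ∈ Finset.range p, (X ^ m : ℤ[X]) ^ i) := by
  classical
  have hr : 0 < m * p := hpm ▸ Fintype.card_pos
  have hm : 0 < m := Nat.pos_of_mul_pos_right hr
  have hp : 0 < p := Nat.pos_of_mul_pos_left hr
  have hord : orderOf τ = m * p := by
    rw [← hpm, ← Nat.card_eq_fintype_card]; exact orderOf_eq_card_of_forall_mem_zpowers hτ
  have hinj : Set.InjOn (fun i => (τ ^ m) ^ i) (Finset.range p) := by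
    have : orderOf (τ ^ m) = p := by
      rw [orderOf_pow_of_dvd hm.ne' (hord ▸ dvd_mul_right m p), hord, Nat.mul_div_cancel_left _ hm]
    intro i hi j hj e
    exact pow_injOn_Iio_orderOf (by simpa [this] using hi) (by simpa [this] using hj) e
  have himg : (Finset.range p).image (fun i => (τ ^ m) ^ i) =
      Finset.univ.filter fun g : G => g ^ p = 1 := by
    refine Finset.eq_of_subset_of_card_le ?_ ?_
    · intro g hg
      obtain ⟨i, -, rfl⟩ := Finset.mem_image.mp hg
      rw [Finset.mem_filter]
      refine ⟨Finset.mem_univ _, ?_⟩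
      rw [← pow_mul, mul_comm i, ← pow_mul, ← mul_assoc, ← hord, pow_mul, pow_orderOf_eq_one,
        one_pow]
    · rw [Finset.card_image_of_injOn hinj, Finset.card_range]
      exact card_filter_pow_eq_one_le hτ hp
  rw [torsionSum]
  trans ∑ g ∈ Finset.univ.filter (fun g : G => g ^ p = 1), MonoidAlgebra.of ℤ G g
  · exact Finset.sum_congr (by ext; simp) fun _ _ => rfl
  · rw [← himg, Finset.sum_image hinj]
    simp

theorem PsiPoly_eq_prod {r : ℕ} (hr : 0 < r) :
    PsiPoly r = ∏ d ∈ r.properDivisors, cyclotomic d ℤ := by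
  rw [PsiPoly, ← prod_cyclotomic_eq_X_pow_sub_one hr, ← Nat.insert_self_properDivisors hr.ne',
    Finset.prod_insert Nat.self_notMem_properDivisors,
    mul_divByMonic_cancel_left _ (cyclotomic.monic r ℤ)]

theorem X_pow_sub_one_dvd_PsiPoly {d r : ℕ} (hd : d ∈ r.properDivisors) :
    X ^ d - 1 ∣ PsiPoly r := by
  have hr : 0 < r := Nat.pos_of_ne_zero fun h => by simp [h] at hd
  obtain ⟨g, hg⟩ := X_pow_sub_one_mul_cyclotomic_dvd_X_pow_sub_one_of_dvd ℤ hd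
  rw [PsiPoly, hg, mul_right_comm, mul_comm _ (cyclotomic r ℤ),
    mul_divByMonic_cancel_left _ (cyclotomic.monic r ℤ)]
  exact dvd_mul_right _ _

theorem PsiPoly_dvd {r : ℕ} (hr : 0 < r) {f : ℤ[X]}
    (h : ∀ p ∈ r.primeFactors, X ^ (r / p) - 1 ∣ f) : PsiPoly r ∣ f := by
  rw [PsiPoly_eq_prod hr]
  refine Finset.prod_dvd_of_isRelPrime (fun d hd e he hde => ?_) fun d hd => ?_
  · have hd0 := Nat.pos_of_mem_properDivisors hd
    have he0 := Nat.pos_of_mem_properDivisors he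
    refine (cyclotomic.irreducible hd0).isRelPrime_iff_not_dvd.mpr fun hdvd => hde ?_
    have := (cyclotomic.irreducible hd0).associated_of_dvd (cyclotomic.irreducible he0) hdvd
    exact cyclotomic_injective
      (eq_of_monic_of_associated (cyclotomic.monic d ℤ) (cyclotomic.monic e ℤ) this)
  · rw [Nat.mem_properDivisors] at hd
    obtain ⟨⟨c, hc⟩, hlt⟩ := hd
    have hc1 : c ≠ 1 := by rintro rfl; omega
    obtain ⟨p, hp, k, rfl⟩ := Nat.exists_prime_and_dvd hc1
    refine dvd_trans ?_ (h p (Nat.mem_primeFactors.mpr ⟨hp, ⟨d * k, by rw [hc]; ring⟩, hr.ne'⟩))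
    have : r / p = d * k := by
      rw [hc, show d * (p * k) = p * (d * k) by ring, Nat.mul_div_cancel_left _ hp.pos]
    rw [this]
    refine (cyclotomic.dvd_X_pow_sub_one d ℤ).trans ?_
    rw [pow_mul]
    exact sub_one_dvd_pow_sub_one _ k

theorem mem_span_PsiPoly_iff {τ : G} (hτ : ∀ g : G, g ∈ Subgroup.zpowers τ)
    (x : MonoidAlgebra ℤ G) :
    x ∈ Ideal.span {aeval (MonoidAlgebra.of ℤ G τ) (PsiPoly (Fintype.card G))} ↔
      ∀ p ∈ (Fintype.card G).primeFactors, torsionSum G p * x = 0 := by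
  have hr : 0 < Fintype.card G := Fintype.card_pos
  rw [Ideal.mem_span_singleton]
  constructor
  · rintro ⟨y, rfl⟩ p hp
    obtain ⟨hpp, hpd, -⟩ := Nat.mem_primeFactors.mp hp
    have hpm : Fintype.card G / p * p = Fintype.card G := Nat.div_mul_cancel hpd
    obtain ⟨g, hg⟩ := X_pow_sub_one_dvd_PsiPoly (d := Fintype.card G / p)
      (Nat.mem_properDivisors.mpr ⟨Nat.div_dvd_of_dvd hpd, Nat.div_lt_self hr hpp.one_lt⟩)
    have hk : (τ ^ (Fintype.card G / p)) ^ p = 1 := by rw [← pow_mul, hpm, pow_card_eq_one]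
    rw [hg, map_mul, ← mul_assoc, ← mul_assoc, map_sub, map_pow, aeval_X, ← map_pow, map_one,
      mul_sub, torsionSum_mul_of hk, mul_one, sub_self, zero_mul, zero_mul]
  · intro h
    obtain ⟨f, rfl⟩ := exists_aeval_eq hτ x
    refine map_dvd _ (PsiPoly_dvd hr fun p hp => ?_)
    obtain ⟨hpp, hpd, -⟩ := Nat.mem_primeFactors.mp hp
    have hpm : Fintype.card G / p * p = Fintype.card G := Nat.div_mul_cancel hpd
    have h0 := h p hp
    rw [torsionSum_eq_aeval hτ hpm.symm, ← map_mul] at h0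
    obtain ⟨g, hg⟩ := X_pow_card_sub_one_dvd_of_aeval_eq_zero hτ h0
    refine ⟨g, ?_⟩
    have hgeom := geom_sum_mul (X ^ (Fintype.card G / p) : ℤ[X]) p
    rw [← pow_mul, hpm] at hgeom
    refine mul_left_cancel₀ (a := ∑ i ∈ Finset.range p, (X ^ (Fintype.card G / p) : ℤ[X]) ^ i)
      (fun e => ?_) ?_
    · rw [e, zero_mul] at hgeom
      exact (monic_X_pow_sub_C (1 : ℤ) hr.ne').ne_zero hgeom.symm
    · rw [hg, ← hgeom, mul_assoc]

theorem differencesVanish_of_linearMap {N : List ℕ} (ℓ : MonoidAlgebra ℤ G →ₗ[ℤ] ℤ)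
    (hℓ : ∀ y, (∀ q ∈ N, torsionSum G q * y = 0) → ℓ y = 0) (s : G) :
    DifferencesVanish N (fun g => ℓ (MonoidAlgebra.of ℤ G g)) s := by
  induction N generalizing ℓ with
  | nil => exact hℓ _ (by simp)
  | cons q N ih =>
    intro h hh
    have := ih (ℓ.comp (LinearMap.mulRight ℤ (1 - MonoidAlgebra.of ℤ G h))) fun y hy => by
      rw [LinearMap.comp_apply, LinearMap.mulRight_apply]
      refine hℓ _ fun k hk => ?_
      rcases List.mem_cons.mp hk with rfl | hk
      · rw [mul_left_comm, mul_sub, torsionSum_mul_of hh, mul_one, sub_self, mul_zero]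
      · rw [← mul_assoc, hy k hk, zero_mul]
    simpa [mul_sub] using this

theorem torsionSum_mul_map_eq_zero {σ : G → G} (σhat : MonoidAlgebra ℤ G →ₗ[ℤ] MonoidAlgebra ℤ G)
    (hσhat : ∀ g : G, σhat (MonoidAlgebra.of ℤ G g) = MonoidAlgebra.of ℤ G (σ g)) {p : ℕ}
    (hσ : ∀ x h : G, h ^ p = 1 → ((σ x)⁻¹ * σ (x * h)) ^ p = 1) {y : MonoidAlgebra ℤ G}
    (hy : torsionSum G p * y = 0) : torsionSum G p * σhat y = 0 := by
  classical
  have key : ∀ y, torsionSum G p * σhat (torsionSum G p * y) =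
      (Finset.univ.filter fun g : G => g ^ p = 1).card • (torsionSum G p * σhat y) := by
    intro y
    induction y using MonoidAlgebra.induction_on with
    | of g =>
      nth_rw 2 [torsionSum]
      rw [Finset.sum_mul, map_sum, Finset.mul_sum, ← Finset.sum_const]
      refine Finset.sum_congr (by ext; simp) fun h hh => ?_
      have hh1 : h ^ p = 1 := by simpa using hh
      rw [← map_mul, hσhat, hσhat, mul_comm h, ← mul_inv_cancel_left (σ g) (σ (g * h)), map_mul,
        mul_left_comm, torsionSum_mul_of (hσ g h hh1), mul_comm]
    | add x y hx hy => simp only [mul_add, map_add, hx, hy, smul_add]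
    | smul c x hx => simp only [mul_smul_comm, map_smul, hx, smul_comm c]
  have h0 := key y
  rw [hy, map_zero, mul_zero] at h0
  have hc : (Finset.univ.filter fun g : G => g ^ p = 1).card ≠ 0 :=
    Finset.card_ne_zero_of_mem (a := 1) (by simp)
  ext g
  have := congrArg (fun x => MonoidAlgebra.coeff x g) h0
  rw [MonoidAlgebra.coeff_smul, Finsupp.smul_apply, MonoidAlgebra.coeff_zero, Finsupp.zero_apply,
    eq_comm, smul_eq_zero] at this
  exact this.resolve_left hc

theorem pow_eq_one_of_map_span_PsiPoly {τ : G} (hτ : ∀ g : G, g ∈ Subgroup.zpowers τ)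
    (σ : Equiv.Perm G) (σhat : MonoidAlgebra ℤ G →ₗ[ℤ] MonoidAlgebra ℤ G)
    (hσhat : ∀ g : G, σhat (MonoidAlgebra.of ℤ G g) = MonoidAlgebra.of ℤ G (σ g))
    (hI : ∀ y, (∀ q ∈ (Fintype.card G).primeFactors, torsionSum G q * y = 0) →
      ∀ q ∈ (Fintype.card G).primeFactors, torsionSum G q * σhat y = 0) {p : ℕ}
    (hp : p ∈ (Fintype.card G).primeFactors) {s h : G} (hh : h ^ p = 1) :
    ((σ s)⁻¹ * σ (s * h)) ^ p = 1 := by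
  classical
  induction p using Nat.strong_induction_on generalizing s h with
  | _ p ih =>
  set N := (Fintype.card G).primeFactors.sort (· ≥ ·)
  have hmem : ∀ q, q ∈ N ↔ q ∈ (Fintype.card G).primeFactors := fun q => Finset.mem_sort _
  have hsort : N.Pairwise (· > ·) := (Finset.sortedGT_sort _).pairwise
  have hprime : ∀ q ∈ N, q.Prime := fun q hq => Nat.prime_of_mem_primeFactors ((hmem q).mp hq)
  have hdvd : ∀ q ∈ N, q ∣ Nat.card G := fun q hq => by
    rw [Nat.card_eq_fintype_card]; exact Nat.dvd_of_mem_primeFactors ((hmem q).mp hq)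
  let ℓ : MonoidAlgebra ℤ G →ₗ[ℤ] ℤ := (Finsupp.lapply (σ s)).comp
    ((MonoidAlgebra.coeffLinearEquiv ℤ).toLinearMap.comp
      ((LinearMap.mulLeft ℤ (torsionSum G p)).comp σhat))
  have hℓ : ∀ y, ℓ y = (torsionSum G p * σhat y).coeff (σ s) := fun _ => rfl
  have hℓof : ∀ y : G, ℓ (MonoidAlgebra.of ℤ G y) = if (σ s * (σ y)⁻¹) ^ p = 1 then 1 else 0 :=
    fun y => by rw [hℓ, hσhat, coeff_torsionSum_mul_of]
  have hone : ∀ y : G, ℓ (MonoidAlgebra.of ℤ G y) = 1 ↔ (σ s * (σ y)⁻¹) ^ p = 1 := fun y => by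
    rw [hℓof]; simp
  have hv : ∀ x, DifferencesVanish N (fun g => ℓ (MonoidAlgebra.of ℤ G g)) x :=
    differencesVanish_of_linearMap ℓ fun y hy => by
      rw [hℓ, hI y (fun q hq => hy q ((hmem q).mpr hq)) p hp]; rfl
  have hpN : p ∈ N := (hmem p).mpr hp
  have hppos : 0 < p := (hprime p hpN).pos
  obtain ⟨L, M, hLM⟩ := List.mem_iff_append.mp hpN
  rw [hLM] at hsort hprime hdvd hv
  have hsM : (p :: M).Pairwise (· > ·) := (List.pairwise_append.mp hsort).2.1
  have hpM : ∀ n ∈ p :: M, n.Prime := fun n hn => hprime n (List.mem_append_right _ hn)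
  have hc := coprime_prod_of_pairwise_gt hsM hpM
  have hfinal : ℓ (MonoidAlgebra.of ℤ G (s * h)) = 1 := by
    refine eq_one_mul_of_differencesVanish (f := fun g => ℓ (MonoidAlgebra.of ℤ G g)) hsort
      hprime hdvd (fun a _ => hv _) (fun x => ?_) ((hone s).mpr (by simp)) (fun x a hx hxa ha => ?_)
      ?_ hh
    · simp only [hℓof]
      split_ifs <;> simp
    · have h1 := (hone x).mp hx
      have h2 := (hone (x * a)).mp hxa
      have h3 : ((σ x)⁻¹ * σ (x * a)) ^ M.prod = 1 := by
        refine pow_prod_eq_one_of_forall_pow_eq_one hsM.of_cons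
          (fun n hn => hpM n (by simp [hn])) (fun q hq y k hk => ?_) x ha
        refine ih q (List.rel_of_pairwise_cons hsM hq) ((hmem q).mp ?_) hk
        rw [hLM]
        simp [hq]
      have e : σ s * (σ x)⁻¹ = σ s * (σ (x * a))⁻¹ * ((σ x)⁻¹ * σ (x * a)) := by
        rw [mul_comm (σ x)⁻¹, ← mul_assoc, inv_mul_cancel_right]
      have h4 := (eq_and_eq_of_mul_eq_mul_of_coprime hc h1 h2 (one_pow _) h3
        (by rw [mul_one, e])).2
      have h5 : σ (x * a) = σ x := (inv_mul_eq_one.mp h4.symm).symm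
      simpa using σ.injective h5
    · refine le_trans ?_ (card_filter_pow_eq_one_le hτ hppos)
      refine Finset.card_le_card_of_injOn (fun y => σ s * (σ y)⁻¹) (fun y hy => ?_)
        fun y _ z _ e => ?_
      · have hy1 := (hone y).mp (Finset.mem_filter.mp (Finset.mem_coe.mp hy)).2
        exact Finset.mem_coe.mpr (Finset.mem_filter.mpr ⟨Finset.mem_univ _, hy1⟩)
      · simpa using e
  have h1 := (hone _).mp hfinal
  rw [← inv_eq_one, ← inv_pow] at h1
  simpa [mul_comm] using h1

theorem mem_subgroup_iff_pow_card_eq_one {τ : G} (hτ : ∀ g : G, g ∈ Subgroup.zpowers τ)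
    (H : Subgroup G) (g : G) : g ∈ H ↔ g ^ Nat.card H = 1 := by
  classical
  have hsub : (H : Set G).toFinset ⊆ Finset.univ.filter fun g : G => g ^ Nat.card H = 1 := by
    intro g hg
    have hgH : g ∈ H := by simpa using hg
    exact Finset.mem_filter.mpr ⟨Finset.mem_univ g, by
      rw [← orderOf_dvd_iff_pow_eq_one]; exact Subgroup.orderOf_dvd_natCard H hgH⟩
  have := Finset.eq_of_subset_of_card_le hsub ((card_filter_pow_eq_one_le hτ Nat.card_pos).trans
    (by rw [Set.toFinset_card, ← Nat.card_eq_fintype_card]; rfl))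
  simpa using Finset.ext_iff.mp this g

theorem image_smul_eq_iff {τ : G} (hτ : ∀ g : G, g ∈ Subgroup.zpowers τ) (σ : Equiv.Perm G)
    (H : Subgroup G) (g : G) :
    σ '' (g • (H : Set G)) = σ g • (H : Set G) ↔
      ∀ h : G, h ^ Nat.card H = 1 → ((σ g)⁻¹ * σ (g * h)) ^ Nat.card H = 1 := by
  have hmem := mem_subgroup_iff_pow_card_eq_one hτ H
  constructor
  · intro e h hh
    have : σ (g * h) ∈ σ g • (H : Set G) := by
      rw [← e]
      exact ⟨g * h, ⟨h, (hmem h).mpr hh, rfl⟩, rfl⟩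
    rw [Set.mem_smul_set_iff_inv_smul_mem, smul_eq_mul] at this
    exact (hmem _).mp this
  · intro hσ
    refine Set.eq_of_subset_of_ncard_le ?_ ?_ (Set.toFinite _)
    · rintro _ ⟨_, ⟨h, hh, rfl⟩, rfl⟩
      rw [Set.mem_smul_set_iff_inv_smul_mem, smul_eq_mul]
      exact (hmem _).mpr (hσ h ((hmem h).mp hh))
    · rw [Set.ncard_image_of_injective _ σ.injective, Set.ncard_smul_set, Set.ncard_smul_set]

end GroupRing

/-- Let `G` be finite cyclic of order `r` with generator `τ`,
`I := Ψ_r(τ)·ℤ[G]`, and for a permutation `σ` of `G` let `σ̂` be the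
`ℤ`-linear automorphism of `ℤ[G]` with `σ̂(g) = σ(g)` for `g ∈ G`.  Then
`σ̂(I) ⊆ I` iff for every `g ∈ G` and every subgroup `H` of prime order,
`σ(gH) = σ(g)H` as subsets of `G`. -/
theorem stmt_16 (G : Type*) [CommGroup G] [Fintype G] (r : ℕ)
    (hcard : Fintype.card G = r) (τ : G) (hτ : ∀ g : G, g ∈ Subgroup.zpowers τ)
    (σ : Equiv.Perm G)
    (σhat : MonoidAlgebra ℤ G ≃ₗ[ℤ] MonoidAlgebra ℤ G)
    (hσhat : ∀ g : G, σhat (MonoidAlgebra.of ℤ G g) = MonoidAlgebra.of ℤ G (σ g)) :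
    let I : Ideal (MonoidAlgebra ℤ G) :=
      Ideal.span {Polynomial.aeval (MonoidAlgebra.of ℤ G τ) (PsiPoly r)}
    (∀ x ∈ I, σhat x ∈ I) ↔
      ∀ (g : G) (H : Subgroup G), (Nat.card H).Prime →
        σ '' (g • (H : Set G)) = σ g • (H : Set G) := by
  subst hcard
  intro I
  have hI : ∀ x, x ∈ I ↔ ∀ p ∈ (Fintype.card G).primeFactors, torsionSum G p * x = 0 :=
    mem_span_PsiPoly_iff hτ
  simp only [hI, image_smul_eq_iff hτ]
  constructor
  · intro h g H hH k hk
    refine pow_eq_one_of_map_span_PsiPoly hτ σ σhat.toLinearMap hσhat h ?_ hk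
    rw [Nat.mem_primeFactors, ← Nat.card_eq_fintype_card]
    exact ⟨hH, H.card_subgroup_dvd_card, Nat.card_pos.ne'⟩
  · intro h x hx p hp
    refine torsionSum_mul_map_eq_zero σhat.toLinearMap hσhat (fun y k hk => ?_) (hx p hp)
    have hpp := Nat.prime_of_mem_primeFactors hp
    have := Fact.mk hpp
    obtain ⟨c, hc⟩ := exists_prime_orderOf_dvd_card p (Nat.dvd_of_mem_primeFactors hp)
    have hcard : Nat.card (Subgroup.zpowers c) = p := by rw [Nat.card_zpowers, hc]
    have := h y (Subgroup.zpowers c) (hcard ▸ hpp)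
    rw [hcard] at this
    exact this k hk

end
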